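/- Let R be any Richman cost function on D. Define R(v,t) by R(b,t) = 0, R(r,t) = 1 for all t, R(v,0) = 1 for v ∉ {b,r}, R(v,t) = (R⁺(v,t−1) + R⁻(v,t−1))/2 for v ∉ {b,r}, t > 0; and define R′(v,t) identically except R′(v,0) = 0 for v ∉ {b,r}. Then for every vertex v and every t ≥ 0, R′(v,t) ≤ R(v) ≤ R(v,t). -/

import Mathlib

open Relation Filter

variable {V : Type*}

/-- `fplus E f v` is `f⁺(v) = sup_{w ∈ S(v)} f(w)`, where `S(v)` is the set of successors of `v`. -/
noncomputable def fplus (E : V → V → Prop) (f : V → ℝ) (v : V) : ℝ :=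
  sSup (f '' {w | E v w})

/-- `fminus E f v` is `f⁻(v) = inf_{u ∈ S(v)} f(u)`. -/
noncomputable def fminus (E : V → V → Prop) (f : V → ℝ) (v : V) : ℝ :=
  sInf (f '' {w | E v w})

/-- A Richman cost function: `R : V → [0,1]`, `R(b) = 0`, `R(r) = 1`, and
`R(v) = (R⁺(v) + R⁻(v))/2` for every `v ∉ {b, r}`. -/
def IsRichman (E : V → V → Prop) (b r : V) (R : V → ℝ) : Prop :=
  (∀ v, R v ∈ Set.Icc (0 : ℝ) 1) ∧ R b = 0 ∧ R r = 1 ∧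
    ∀ v, v ≠ b → v ≠ r → R v = (fplus E R v + fminus E R v) / 2

/-- The auxiliary function `R(v,t)`: `R(b,t) = 0`, `R(r,t) = 1`, `R(v,0) = 1` for `v ∉ {b,r}`,
and `R(v,t) = (R⁺(v,t-1) + R⁻(v,t-1))/2` for `v ∉ {b,r}`, `t > 0`. -/
noncomputable def Rseq [DecidableEq V] (E : V → V → Prop) (b r : V) : ℕ → V → ℝ
  | 0 => fun v => if v = b then 0 else 1
  | t + 1 => fun v =>
      if v = b then 0
      else if v = r then 1
      else (fplus E (Rseq E b r t) v + fminus E (Rseq E b r t) v) / 2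

/-- The auxiliary function `R'(v,t)`: `R'(b,t) = 0`, `R'(r,t) = 1`, `R'(v,0) = 0` for `v ∉ {b,r}`,
and `R'(v,t) = (R'⁺(v,t-1) + R'⁻(v,t-1))/2` for `v ∉ {b,r}`, `t > 0`. -/
noncomputable def Rseq' [DecidableEq V] (E : V → V → Prop) (b r : V) : ℕ → V → ℝ
  | 0 => fun v => if v = r then 1 else 0
  | t + 1 => fun v =>
      if v = b then 0
      else if v = r then 1
      else (fplus E (Rseq' E b r t) v + fminus E (Rseq' E b r t) v) / 2

theorem fplus_mono_aux [Fintype V] (E : V → V → Prop) (f g : V → ℝ) (h : ∀ v, f v ≤ g v) (v : V) :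
    fplus E f v ≤ fplus E g v := by
  unfold fplus
  rcases Set.eq_empty_or_nonempty {w | E v w} with he | hne
  · rw [he]; simp
  · apply csSup_le (hne.image f)
    rintro _ ⟨w, hw, rfl⟩
    exact (h w).trans (le_csSup (Set.toFinite _).bddAbove ⟨w, hw, rfl⟩)

theorem fminus_mono_aux [Fintype V] (E : V → V → Prop) (f g : V → ℝ) (h : ∀ v, f v ≤ g v) (v : V) :
    fminus E f v ≤ fminus E g v := by
  unfold fminus
  rcases Set.eq_empty_or_nonempty {w | E v w} with he | hne
  · rw [he]; simp
  · apply le_csInf (hne.image g)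
    rintro _ ⟨w, hw, rfl⟩
    exact le_trans (csInf_le (Set.toFinite _).bddBelow (Set.mem_image_of_mem f hw)) (h w)

/-- Any Richman cost function is sandwiched between the two auxiliary iterations:
`R'(v,t) ≤ R(v) ≤ R(v,t)` for every `v` and `t`. -/
theorem richman_between_Rseq [Fintype V] [DecidableEq V] (E : V → V → Prop) (b r : V)
    (hbr : b ≠ r)
    (hreach : ∀ v, ReflTransGen E v b ∨ ReflTransGen E v r)
    (R : V → ℝ) (hR : IsRichman E b r R) :
    ∀ (v : V) (t : ℕ), Rseq' E b r t v ≤ R v ∧ R v ≤ Rseq E b r t v := by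
  obtain ⟨h01, hb, hr, hv⟩ := hR
  intro v t
  induction t generalizing v with
  | zero =>
    have h0 := (h01 v).1
    have h1 := (h01 v).2
    constructor
    · simp only [Rseq']
      split_ifs with h
      · rw [h, hr]
      · exact h0
    · simp only [Rseq]
      split_ifs with h
      · rw [h, hb]
      · exact h1
  | succ t ih =>
    have a1 := fplus_mono_aux E _ _ (fun v => (ih v).1) v
    have a2 := fminus_mono_aux E _ _ (fun v => (ih v).1) v
    have a3 := fplus_mono_aux E _ _ (fun v => (ih v).2) v
    have a4 := fminus_mono_aux E _ _ (fun v => (ih v).2) v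
    simp only [Rseq', Rseq]
    split_ifs with h h'
    · rw [h, hb]; simp
    · rw [h', hr]; simp
    · rw [hv v h h']
      constructor <;> linarith
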